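/- arXiv:2302.01587 — 2 statements merged into one kernel-verified Lean document; each statement's English description precedes it below -/
import Mathlib

section
/- Let G be a thick-leaved tree, i.e., a graph obtained from a tree T by a sequence of the following operations: choose a leaf v of T with neighbor v', replace v by a complete graph K, and replace the edge v'v by an edge between v' and one vertex of K. If B₁, …, B_k are the simplicial blocks of G, then gp_e(G) = Σ_{i=1}^{k} C(n(B_i), 2), where n(B_i) is the number of vertices of B_i and C(n,2) = n(n−1)/2. -/
/-!
The argument only uses the following property of a thick-leaved tree `G`, which passes through
every leaf replacement: `G` is connected and each of its edges is a bridge or has a simplicial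
endpoint (`BridgeOrSimplicial`).

Let `X₀` be the set of edges with a simplicial endpoint. A simplicial vertex is never an interior
vertex of a geodesic, so a geodesic contains at most two edges of `X₀`, and `X₀` is an edge general
position set. An edge of a simplicial block that has no simplicial endpoint would be a bridge lying
in a triangle; hence `X₀` is the disjoint union of the edge sets of the simplicial blocks, and
`|X₀|` is the sum in the theorem.

For the upper bound let `X` be any edge general position set. If `X ⊆ X₀` there is nothing to prove.
Otherwise pick a bridge `e₀ ∈ X \ X₀`. One of its endpoints `r` is such that every geodesic starting
in `r` contains at most one edge of `X` (`exists_good_root`): if both endpoints failed, two offending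
geodesics could be glued along `e₀` to a geodesic with three edges of `X`. From `r`, continue a
geodesic through `e ∈ X \ X₀` until its last edge `wz` lies in `X₀` (`exists_far_edge`). Then
`wz ∉ X`, and since all `r`-`z` walks use the bridge `e`, the map `e ↦ wz` is an injection of
`X \ X₀` into `X₀ \ X`.
-/

/-- `X` is an edge general position set of `G`: `X` consists of edges of `G` and every
shortest path of `G` contains at most two edges of `X`. -/
def SimpleGraph.IsEdgeGPSet {V : Type*} (G : SimpleGraph V) (X : Set (Sym2 V)) : Prop :=
  X ⊆ G.edgeSet ∧
    ∀ (u v : V) (p : G.Walk u v), p.IsPath → p.length = G.dist u v →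
      (X ∩ {e | e ∈ p.edges}).ncard ≤ 2

/-- The edge general position number of `G`. -/
noncomputable def SimpleGraph.egp {V : Type*} (G : SimpleGraph V) : ℕ :=
  sSup {n | ∃ X : Set (Sym2 V), G.IsEdgeGPSet X ∧ X.ncard = n}
/-- The graph obtained from `G` by replacing the vertex `v` (intended to be a leaf with
unique neighbour `v'`) by a complete graph on `n` vertices: `v` is removed, a clique
`Fin n` is added, and the edge `v'v` is replaced by an edge between `v'` (the vertices
adjacent to `v` in `G`) and one vertex of the clique. -/
def replaceLeaf {V : Type} (G : SimpleGraph V) (v : V) (n : ℕ) :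
    SimpleGraph ({x : V // x ≠ v} ⊕ Fin n) :=
  SimpleGraph.fromRel (fun a b =>
    match a, b with
    | Sum.inl x, Sum.inl y => G.Adj x.1 y.1
    | Sum.inl x, Sum.inr i => G.Adj x.1 v ∧ i.1 = 0
    | Sum.inr _, Sum.inr _ => True
    | _, _ => False)

/-- A graph bundled with its vertex type. -/
structure GraphOn : Type 1 where
  carrier : Type
  graph : SimpleGraph carrier

/-- One step of the thick-leaved-tree construction: choose a leaf `v` of the current
graph and replace it by a (nonempty) complete graph as in `replaceLeaf`. -/
def TLStep (A B : GraphOn) : Prop :=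
  ∃ v : A.carrier, (A.graph.neighborSet v).ncard = 1 ∧
    ∃ n : ℕ, 1 ≤ n ∧ Nonempty (B.graph ≃g replaceLeaf A.graph v n)

/-- `G` is a thick-leaved tree: it is obtained from a (finite) tree by a sequence of
leaf-replacement operations. -/
def IsThickLeavedTree {V : Type} (G : SimpleGraph V) : Prop :=
  ∃ (U : Type) (_ : Fintype U) (T : SimpleGraph U), T.IsTree ∧
    Relation.ReflTransGen TLStep ⟨U, T⟩ ⟨V, G⟩

/-- A vertex is simplicial if its neighbourhood induces a complete subgraph. -/
def SimpleGraph.IsSimplicialVertex {V : Type} (G : SimpleGraph V) (v : V) : Prop :=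
  G.IsClique (G.neighborSet v)

/-- The simplicial blocks of a block graph `G`, viewed as vertex sets.  In a block graph
the blocks are precisely the maximal cliques, and a block is simplicial if it contains a
simplicial vertex. -/
def simplicialBlocks {V : Type} (G : SimpleGraph V) : Set (Set V) :=
  {B | Maximal (fun s => G.IsClique s) B ∧ ∃ v ∈ B, G.IsSimplicialVertex v}

namespace ThickLeaved

open SimpleGraph

/-! ### Bridges and distances -/

/-- `xy` is the only edge leaving some vertex set that contains `x` and not `y`. For an edge `xy`
this says that it is a bridge. -/
def IsCut {V : Type} (G : SimpleGraph V) (x y : V) : Prop :=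
  ∃ S : Set V, x ∈ S ∧ y ∉ S ∧ ∀ a ∈ S, ∀ b ∉ S, G.Adj a b → a = x ∧ b = y

/-- The metric form of being a bridge: every vertex is strictly closer to one of `x`, `y`, and
geodesics between the two sides run through `xy`. -/
def DistBridge {V : Type} (G : SimpleGraph V) (x y : V) : Prop :=
  (∀ v, G.dist v y = G.dist v x + 1 ∨ G.dist v x = G.dist v y + 1) ∧
  ∀ a b, G.dist a y = G.dist a x + 1 → G.dist b x = G.dist b y + 1 →
    G.dist a b = G.dist a x + 1 + G.dist y b

/-- `G` is connected and each edge has a simplicial endpoint or is a bridge. -/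
def BridgeOrSimplicial {V : Type} (G : SimpleGraph V) : Prop :=
  G.Connected ∧ ∀ x y, G.Adj x y →
    G.IsSimplicialVertex x ∨ G.IsSimplicialVertex y ∨ IsCut G x y

variable {V : Type} {G : SimpleGraph V}

lemma DistBridge.symm {x y : V} (h : DistBridge G x y) : DistBridge G y x := by
  refine ⟨fun v => (h.1 v).symm, fun a b ha hb => ?_⟩
  have := h.2 b a hb ha
  rw [dist_comm (u := b) (v := a), dist_comm (u := y) (v := a), dist_comm (u := b) (v := x)] at this
  omega

lemma dist_add_le_length (hG : G.Connected) {x y : V} {S : Set V}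
    (hS : ∀ a ∈ S, ∀ b ∉ S, G.Adj a b → a = x ∧ b = y) {a b : V} (p : G.Walk a b)
    (ha : a ∈ S) (hb : b ∉ S) : G.dist a x + 1 + G.dist y b ≤ p.length := by
  induction p with
  | nil => exact absurd ha hb
  | @cons u v w h p ih =>
    rw [Walk.length_cons]
    by_cases hv : v ∈ S
    · have := ih hv hb
      have h1 := hG.dist_triangle (u := u) (v := v) (w := x)
      have h2 := dist_eq_one_iff_adj.2 h
      omega
    · obtain ⟨rfl, rfl⟩ := hS _ ha _ hv h
      have := dist_le p
      rw [dist_self]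
      omega

lemma IsCut.distBridge (hG : G.Connected) {x y : V} (hxy : G.Adj x y) (h : IsCut G x y) :
    DistBridge G x y := by
  obtain ⟨S, hx, hy, hS⟩ := h
  have key : ∀ a ∈ S, ∀ b ∉ S, G.dist a b = G.dist a x + 1 + G.dist y b := by
    intro a ha b hb
    obtain ⟨p, hp⟩ := hG.exists_walk_length_eq_dist a b
    have h1 := dist_add_le_length hG hS p ha hb
    have h2 := hG.dist_triangle (u := a) (v := x) (w := b)
    have h3 := hG.dist_triangle (u := x) (v := y) (w := b)
    have h4 := dist_eq_one_iff_adj.2 hxy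
    omega
  have k1 : ∀ a ∈ S, G.dist a y = G.dist a x + 1 := by
    intro a ha
    rw [key a ha y hy, dist_self]
  have k2 : ∀ b ∉ S, G.dist b x = G.dist b y + 1 := by
    intro b hb
    rw [dist_comm, key x hx b hb, dist_self, dist_comm (u := b)]
    omega
  refine ⟨fun v => ?_, fun a b ha hb => ?_⟩
  · by_cases hv : v ∈ S
    · exact Or.inl (k1 v hv)
    · exact Or.inr (k2 v hv)
  · apply key
    · by_contra hn
      have := k2 a hn
      omega
    · intro hn
      have := k1 b hn
      omega

/-- The only edge between the two sides of a bridge is the bridge itself. -/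
lemma DistBridge.eq_of_adj (hG : G.Connected) {x y a b : V} (h : DistBridge G x y)
    (ha : G.dist a y = G.dist a x + 1) (hb : G.dist b x = G.dist b y + 1) (hab : G.Adj a b) :
    a = x ∧ b = y := by
  have h1 := h.2 a b ha hb
  rw [dist_eq_one_iff_adj.2 hab] at h1
  have h2 : G.dist a x = 0 := by omega
  have h3 : G.dist y b = 0 := by omega
  exact ⟨hG.dist_eq_zero_iff.1 h2, (hG.dist_eq_zero_iff.1 h3).symm⟩

lemma BridgeOrSimplicial.distBridge (hQ : BridgeOrSimplicial G) {x y : V} (hxy : G.Adj x y)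
    (hx : ¬ G.IsSimplicialVertex x) (hy : ¬ G.IsSimplicialVertex y) : DistBridge G x y := by
  rcases hQ.2 x y hxy with h | h | h
  · exact absurd h hx
  · exact absurd h hy
  · exact h.distBridge hQ.1 hxy

/-! ### The property holds for thick-leaved trees -/

lemma bridgeOrSimplicial_of_isTree (hT : G.IsTree) : BridgeOrSimplicial G := by
  refine ⟨hT.1, fun x y hxy => Or.inr (Or.inr ?_)⟩
  have hb := isAcyclic_iff_forall_adj_isBridge.1 hT.2 hxy
  rw [isBridge_iff] at hb
  refine ⟨{v | (G \ fromEdgeSet {s(x, y)}).Reachable x v}, Reachable.refl _, hb, ?_⟩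
  intro a ha b hb' hab
  by_cases he : s(a, b) = s(x, y)
  · rcases Sym2.eq_iff.1 he with h | ⟨rfl, rfl⟩
    · exact h
    · exact absurd ha hb
  · exfalso
    apply hb'
    refine Reachable.trans ha (Adj.reachable ?_)
    rw [sdiff_adj, fromEdgeSet_adj]
    exact ⟨hab, fun h => he h.1⟩

lemma BridgeOrSimplicial.of_iso {W : Type} {H : SimpleGraph W} (f : G ≃g H)
    (hQ : BridgeOrSimplicial H) : BridgeOrSimplicial G := by
  have simp_of : ∀ x, H.IsSimplicialVertex (f x) → G.IsSimplicialVertex x := by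
    intro x hx a ha b hb hab
    rw [mem_neighborSet] at ha hb
    exact f.map_adj_iff.1 (hx (f.map_adj_iff.2 ha) (f.map_adj_iff.2 hb) (f.injective.ne hab))
  refine ⟨f.connected_iff.2 hQ.1, fun x y hxy => ?_⟩
  rcases hQ.2 (f x) (f y) (f.map_adj_iff.2 hxy) with h | h | ⟨S, hx, hy, hS⟩
  · exact Or.inl (simp_of _ h)
  · exact Or.inr (Or.inl (simp_of _ h))
  · refine Or.inr (Or.inr ⟨f ⁻¹' S, hx, hy, fun a ha b hb hab => ?_⟩)
    have := hS _ ha _ hb (f.map_adj_iff.2 hab)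
    exact ⟨f.injective this.1, f.injective this.2⟩

lemma replaceLeaf_inl_inl {v : V} {n : ℕ} (x y : {x : V // x ≠ v}) :
    (replaceLeaf G v n).Adj (Sum.inl x) (Sum.inl y) ↔ G.Adj x y := by
  simp only [replaceLeaf, fromRel_adj]
  constructor
  · rintro ⟨-, h | h⟩
    · exact h
    · exact h.symm
  · intro h
    refine ⟨fun e => ?_, Or.inl h⟩
    rw [Sum.inl.inj e] at h
    exact G.loopless.irrefl _ h

lemma replaceLeaf_inl_inr {v : V} {n : ℕ} (x : {x : V // x ≠ v}) (i : Fin n) :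
    (replaceLeaf G v n).Adj (Sum.inl x) (Sum.inr i) ↔ G.Adj x v ∧ i.1 = 0 := by
  simp [replaceLeaf, fromRel_adj]

lemma replaceLeaf_inr_inr {v : V} {n : ℕ} (i j : Fin n) :
    (replaceLeaf G v n).Adj (Sum.inr i) (Sum.inr j) ↔ i ≠ j := by
  simp [replaceLeaf, fromRel_adj]

lemma replaceLeaf_inr_inl {v : V} {n : ℕ} (x : {x : V // x ≠ v}) (i : Fin n) :
    (replaceLeaf G v n).Adj (Sum.inr i) (Sum.inl x) ↔ G.Adj x v ∧ i.1 = 0 := by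
  rw [adj_comm, replaceLeaf_inl_inr]

lemma replaceLeaf_connected (hG : G.Connected) (v : V) {n : ℕ} (hn : 1 ≤ n) :
    (replaceLeaf G v n).Connected := by
  have aux : ∀ (x w : V) (p : G.Walk x w), w = v → ∀ hx : x ≠ v,
      (replaceLeaf G v n).Reachable (Sum.inl ⟨x, hx⟩) (Sum.inr ⟨0, hn⟩) := by
    intro x w p hw
    induction p with
    | nil => exact fun hx => absurd hw hx
    | @cons a b c h p ih =>
      intro hx
      by_cases hb : b = v
      · subst hb
        exact Adj.reachable ((replaceLeaf_inl_inr _ _).2 ⟨h, rfl⟩)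
      · exact (Adj.reachable ((replaceLeaf_inl_inl ⟨a, hx⟩ ⟨b, hb⟩).2 h)).trans (ih hw hb)
  rw [connected_iff_exists_forall_reachable]
  refine ⟨Sum.inr ⟨0, hn⟩, fun w => Reachable.symm ?_⟩
  rcases w with ⟨x, hx⟩ | i
  · obtain ⟨p⟩ := hG.preconnected x v
    exact aux x v p rfl hx
  · by_cases hi : i = ⟨0, hn⟩
    · rw [hi]
    · exact Adj.reachable ((replaceLeaf_inr_inr _ _).2 hi)

lemma replaceLeaf_inr_simplicial {v : V} {n : ℕ} (i : Fin n) (hi : i.1 ≠ 0) :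
    (replaceLeaf G v n).IsSimplicialVertex (Sum.inr i) := by
  rintro (a | a) ha (b | b) hb hab
  · exact absurd ((replaceLeaf_inr_inl _ _).1 ha).2 hi
  · exact absurd ((replaceLeaf_inr_inl _ _).1 ha).2 hi
  · exact absurd ((replaceLeaf_inr_inl _ _).1 hb).2 hi
  · exact (replaceLeaf_inr_inr _ _).2 (fun h => hab (congrArg _ h))

/-- A simplicial vertex with a neighbour other than the leaf `v` is not adjacent to `v`, so
replacing `v` does not affect its neighbourhood. -/
lemma replaceLeaf_inl_simplicial {v v' : V} (hv : G.neighborSet v = {v'}) {n : ℕ}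
    (x y : {x : V // x ≠ v}) (hxy : G.Adj x y) (hx : G.IsSimplicialVertex x) :
    (replaceLeaf G v n).IsSimplicialVertex (Sum.inl x) := by
  have hxv : ¬ G.Adj x v := by
    intro h
    have h1 : (x : V) ∈ G.neighborSet v := h.symm
    have h2 : (y : V) ∈ G.neighborSet v := (hx hxy h y.2).symm
    rw [hv] at h1 h2
    have : (x : V) = y := h1.trans h2.symm
    rw [this] at hxy
    exact G.loopless.irrefl _ hxy
  rintro (a | a) ha (b | b) hb hab
  · exact (replaceLeaf_inl_inl _ _).2 (hx ((replaceLeaf_inl_inl _ _).1 ha)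
      ((replaceLeaf_inl_inl _ _).1 hb) (fun h => hab (congrArg _ (Subtype.ext h))))
  · exact absurd ((replaceLeaf_inl_inr _ _).1 hb).1 hxv
  · exact absurd ((replaceLeaf_inl_inr _ _).1 ha).1 hxv
  · exact absurd ((replaceLeaf_inl_inr _ _).1 ha).1 hxv

/-- The edge joining the old part to the new clique is a bridge. -/
lemma replaceLeaf_isCut_new {v v' : V} (hv : G.neighborSet v = {v'}) {n : ℕ}
    (x : {x : V // x ≠ v}) (i : Fin n) (h : G.Adj x v ∧ i.1 = 0) :
    IsCut (replaceLeaf G v n) (Sum.inl x) (Sum.inr i) := by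
  refine ⟨Set.range Sum.inl, ⟨x, rfl⟩, by simp, ?_⟩
  rintro _ ⟨a, rfl⟩ (b | b) hb hab
  · exact absurd ⟨b, rfl⟩ hb
  · rw [replaceLeaf_inl_inr] at hab
    have h1 : (x : V) ∈ G.neighborSet v := h.1.symm
    have h2 : (a : V) ∈ G.neighborSet v := hab.1.symm
    rw [hv] at h1 h2
    have h3 : a = x := Subtype.ext (h2.trans h1.symm)
    have h4 : b = i := Fin.ext (hab.2.trans h.2.symm)
    rw [h3, h4]
    exact ⟨rfl, rfl⟩

lemma IsCut.symm {x y : V} (h : IsCut G x y) : IsCut G y x := by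
  obtain ⟨S, hx, hy, hS⟩ := h
  refine ⟨Sᶜ, hy, fun h => h hx, fun a ha b hb hab => ?_⟩
  exact (hS b (not_not.1 hb) a ha hab.symm).symm

lemma replaceLeaf_isCut_old {v : V} {n : ℕ} (x y : {x : V // x ≠ v}) (h : IsCut G x y) :
    IsCut (replaceLeaf G v n) (Sum.inl x) (Sum.inl y) := by
  obtain ⟨S, hx, hy, hS⟩ := h
  -- The new clique goes to the side of the leaf it replaces.
  refine ⟨{w | Sum.elim Subtype.val (fun _ => v) w ∈ S}, hx, hy, ?_⟩
  rintro (a | a) ha (b | b) hb hab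
  · have := hS _ ha _ hb ((replaceLeaf_inl_inl _ _).1 hab)
    exact ⟨congrArg _ (Subtype.ext this.1), congrArg _ (Subtype.ext this.2)⟩
  · exact absurd (hS _ ha _ hb ((replaceLeaf_inl_inr _ _).1 hab).1).2.symm y.2
  · exact absurd (hS _ ha _ hb ((replaceLeaf_inr_inl _ _).1 hab).1.symm).1.symm x.2
  · exact absurd ha hb

lemma BridgeOrSimplicial.leaf_step (hQ : BridgeOrSimplicial G) {v : V}
    (hv : (G.neighborSet v).ncard = 1) {n : ℕ} (hn : 1 ≤ n) :
    BridgeOrSimplicial (replaceLeaf G v n) := by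
  obtain ⟨v', hv⟩ := Set.ncard_eq_one.1 hv
  refine ⟨replaceLeaf_connected hQ.1 v hn, ?_⟩
  rintro (x | x) (y | y) hxy
  · have h := (replaceLeaf_inl_inl _ _).1 hxy
    rcases hQ.2 _ _ h with h1 | h1 | h1
    · exact Or.inl (replaceLeaf_inl_simplicial hv x y h h1)
    · exact Or.inr (Or.inl (replaceLeaf_inl_simplicial hv y x h.symm h1))
    · exact Or.inr (Or.inr (replaceLeaf_isCut_old x y h1))
  · exact Or.inr (Or.inr (replaceLeaf_isCut_new hv _ _ ((replaceLeaf_inl_inr _ _).1 hxy)))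
  · exact Or.inr (Or.inr (replaceLeaf_isCut_new hv _ _ ((replaceLeaf_inr_inl _ _).1 hxy)).symm)
  · have h := (replaceLeaf_inr_inr _ _).1 hxy
    by_cases hx : x.1 = 0
    · have hy : y.1 ≠ 0 := fun hy => h (Fin.ext (hx.trans hy.symm))
      exact Or.inr (Or.inl (replaceLeaf_inr_simplicial y hy))
    · exact Or.inl (replaceLeaf_inr_simplicial x hx)

lemma bridgeOrSimplicial_of_isThickLeavedTree (h : IsThickLeavedTree G) :
    BridgeOrSimplicial G := by
  obtain ⟨U, _, T, hT, hs⟩ := h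
  have : ∀ B : GraphOn, Relation.ReflTransGen TLStep ⟨U, T⟩ B → BridgeOrSimplicial B.graph := by
    intro B hB
    induction hB with
    | refl => exact bridgeOrSimplicial_of_isTree hT
    | tail _ hstep ih =>
      obtain ⟨v, hv, n, hn, ⟨f⟩⟩ := hstep
      exact (ih.leaf_step hv hn).of_iso f
  exact this _ hs

/-! ### The edges with a simplicial endpoint -/

/-- The set `X₀` of edges with a simplicial endpoint. -/
def simplicialEdges (G : SimpleGraph V) : Set (Sym2 V) :=
  {e | e ∈ G.edgeSet ∧ ∃ v ∈ e, G.IsSimplicialVertex v}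

/-- A simplicial vertex is not an interior vertex of a geodesic. -/
lemma not_simplicial_getVert (hG : G.Connected) {u v : V} (p : G.Walk u v)
    (hp : p.length = G.dist u v) {i : ℕ} (hi : 0 < i) (hi' : i < p.length) :
    ¬ G.IsSimplicialVertex (p.getVert i) := by
  intro hs
  obtain ⟨j, rfl⟩ : ∃ j, i = j + 1 := ⟨i - 1, by omega⟩
  have h1 : G.Adj (p.getVert (j + 1)) (p.getVert j) := (p.adj_getVert_succ (by omega)).symm
  have h2 : G.Adj (p.getVert (j + 1)) (p.getVert (j + 2)) := p.adj_getVert_succ (by omega)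
  have h3 : G.dist (p.getVert j) (p.getVert (j + 2)) ≤ 1 := by
    by_cases he : p.getVert j = p.getVert (j + 2)
    · rw [he, dist_self]
      omega
    · exact (dist_eq_one_iff_adj.2 (hs h1 h2 he)).le
  have h4 : G.dist u (p.getVert j) ≤ j := by
    refine (dist_le (p.take j)).trans ?_
    rw [Walk.take_length]
    omega
  have h5 : G.dist (p.getVert (j + 2)) v ≤ p.length - (j + 2) := by
    refine (dist_le (p.drop (j + 2))).trans ?_
    rw [Walk.drop_length]
  have h6 := hG.dist_triangle (u := u) (v := p.getVert j) (w := v)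
  have h7 := hG.dist_triangle (u := p.getVert j) (v := p.getVert (j + 2)) (w := v)
  omega

lemma isEdgeGPSet_simplicialEdges (hG : G.Connected) : G.IsEdgeGPSet (simplicialEdges G) := by
  refine ⟨fun e he => he.1, fun u v p _ hp => ?_⟩
  have hsub : simplicialEdges G ∩ {e | e ∈ p.edges} ⊆
      {s(p.getVert 0, p.getVert 1), s(p.getVert (p.length - 1), p.getVert p.length)} := by
    rintro e ⟨⟨-, s, hse, hs⟩, he⟩
    obtain ⟨i, hi, rfl⟩ : ∃ i, i < p.length ∧ e = s(p.getVert i, p.getVert (i + 1)) := by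
      rw [Set.mem_ofPred_eq, List.mem_iff_getElem] at he
      obtain ⟨i, hi, rfl⟩ := he
      rw [Walk.length_edges] at hi
      exact ⟨i, hi, by rw [Walk.getElem_edges]⟩
    rcases Sym2.mem_iff.1 hse with rfl | rfl
    · left
      have : i = 0 := by
        by_contra h0
        exact not_simplicial_getVert hG p hp (by omega) hi hs
      rw [this]
    · right
      have : i + 1 = p.length := by
        by_contra h0
        exact not_simplicial_getVert hG p hp (by omega) (by omega) hs
      have h2 : i = p.length - 1 := by omega
      rw [Set.mem_singleton_iff, this, h2]
  exact (Set.ncard_le_ncard hsub (Set.toFinite _)).trans ((Set.ncard_insert_le _ _).trans (by rw [Set.ncard_singleton]))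

/-- A maximal clique containing a simplicial vertex is the closed neighbourhood of that vertex. -/
lemma maximal_clique_eq {B : Set V} (hB : Maximal (fun s => G.IsClique s) B) {v : V} (hv : v ∈ B)
    (hs : G.IsSimplicialVertex v) : B = insert v (G.neighborSet v) := by
  refine hB.eq_of_subset (hs.insert fun b hb _ => hb) ?_
  intro b hb
  by_cases h : b = v
  · exact Or.inl h
  · exact Or.inr (hB.1 hv hb (Ne.symm h))

lemma maximal_clique_closedNeighbor {v : V} (hs : G.IsSimplicialVertex v) :
    Maximal (fun s => G.IsClique s) (insert v (G.neighborSet v)) := by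
  refine ⟨hs.insert fun b hb _ => hb, fun C hC hle b hb => ?_⟩
  by_cases h : b = v
  · exact Or.inl h
  · exact Or.inr (hC (hle (Set.mem_insert _ _)) hb (Ne.symm h))

/-- Every edge of a simplicial block has a simplicial endpoint: otherwise it would be a bridge
contained in a triangle. -/
lemma simplicial_of_mem_block (hQ : BridgeOrSimplicial G) {B : Set V}
    (hB : B ∈ simplicialBlocks G) {x y : V} (hx : x ∈ B) (hy : y ∈ B) (hxy : x ≠ y) :
    G.IsSimplicialVertex x ∨ G.IsSimplicialVertex y := by
  by_contra! hn
  obtain ⟨hmax, s, hsB, hs⟩ := hB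
  have hd := (hQ.distBridge (hmax.1 hx hy hxy) hn.1 hn.2).1 s
  have hsx : s ≠ x := fun h => hn.1 (h ▸ hs)
  have hsy : s ≠ y := fun h => hn.2 (h ▸ hs)
  rw [dist_eq_one_iff_adj.2 (hmax.1 hsB hx hsx), dist_eq_one_iff_adj.2 (hmax.1 hsB hy hsy)] at hd
  omega

lemma sum_blocks_eq [Fintype V] (hQ : BridgeOrSimplicial G) :
    ∑ᶠ B ∈ simplicialBlocks G, (Set.ncard B).choose 2 = (simplicialEdges G).ncard := by
  classical
  have hfin : (simplicialBlocks G).Finite := Set.toFinite _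
  rw [finsum_mem_eq_finite_toFinset_sum _ hfin]
  set E : Set V → Finset (Sym2 V) := fun B => B.toFinset.offDiag.image Sym2.mk.uncurry with hE
  have hmem : ∀ B x y, s(x, y) ∈ E B ↔ x ∈ B ∧ y ∈ B ∧ x ≠ y := by
    intro B x y
    simp only [hE, Finset.mem_image, Finset.mem_offDiag, Set.mem_toFinset, Prod.exists]
    constructor
    · rintro ⟨a, b, ⟨ha, hb, hab⟩, h⟩
      rcases Sym2.eq_iff.1 h with ⟨rfl, rfl⟩ | ⟨rfl, rfl⟩
      · exact ⟨ha, hb, hab⟩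
      · exact ⟨hb, ha, hab.symm⟩
    · rintro h
      exact ⟨x, y, h, rfl⟩
  have hcard : ∀ B, (E B).card = (Set.ncard B).choose 2 := by
    intro B
    rw [hE, Sym2.card_image_offDiag, Set.ncard_eq_toFinset_card']
  have hunion : simplicialEdges G = ((hfin.toFinset.biUnion E : Finset (Sym2 V)) : Set (Sym2 V)) := by
    ext e
    induction e using Sym2.ind with
    | _ x y =>
      simp only [Finset.coe_biUnion, Set.mem_iUnion, Finset.mem_coe, Set.Finite.mem_toFinset, hmem,
        exists_prop]
      constructor
      · rintro ⟨hxy, s, hs, hsimp⟩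
        rw [mem_edgeSet] at hxy
        refine ⟨insert s (G.neighborSet s),
          ⟨maximal_clique_closedNeighbor hsimp, s, Set.mem_insert _ _, hsimp⟩, ?_⟩
        rcases Sym2.mem_iff.1 hs with rfl | rfl
        · exact ⟨Or.inl rfl, Or.inr hxy, hxy.ne⟩
        · exact ⟨Or.inr hxy.symm, Or.inl rfl, hxy.ne⟩
      · rintro ⟨B, hB, hx, hy, hxy⟩
        refine ⟨hB.1.1 hx hy hxy, ?_⟩
        rcases simplicial_of_mem_block hQ hB hx hy hxy with h | h
        · exact ⟨x, Sym2.mem_mk_left _ _, h⟩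
        · exact ⟨y, Sym2.mem_mk_right _ _, h⟩
  rw [hunion, Set.ncard_coe_finset, Finset.card_biUnion]
  · exact (Finset.sum_congr rfl fun B _ => hcard B).symm
  · intro B hB C hC hBC
    rw [Finset.mem_coe, Set.Finite.mem_toFinset] at hB hC
    rw [Function.onFun, Finset.disjoint_left]
    intro e
    induction e using Sym2.ind with
    | _ x y =>
      intro h1 h2
      rw [hmem] at h1 h2
      rcases simplicial_of_mem_block hQ hB h1.1 h1.2.1 h1.2.2 with h | h
      · exact hBC ((maximal_clique_eq hB.1 h1.1 h).trans (maximal_clique_eq hC.1 h2.1 h).symm)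
      · exact hBC ((maximal_clique_eq hB.1 h1.2.1 h).trans (maximal_clique_eq hC.1 h2.2.1 h).symm)

/-! ### The upper bound -/

/-- Three edges of `X` in line on a geodesic, expressed by distances, are impossible. -/
lemma no_three (hG : G.Connected) {X : Set (Sym2 V)} (hX : G.IsEdgeGPSet X)
    {a₁ b₁ a₂ b₂ a₃ b₃ : V} (h₁ : s(a₁, b₁) ∈ X) (h₂ : s(a₂, b₂) ∈ X) (h₃ : s(a₃, b₃) ∈ X)
    (hd : G.dist a₁ b₃ = 1 + G.dist b₁ a₂ + 1 + G.dist b₂ a₃ + 1) : False := by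
  classical
  obtain ⟨p, hp⟩ := hG.exists_walk_length_eq_dist b₁ a₂
  obtain ⟨q, hq⟩ := hG.exists_walk_length_eq_dist b₂ a₃
  have e₁ : G.Adj a₁ b₁ := hX.1 h₁
  have e₂ : G.Adj a₂ b₂ := hX.1 h₂
  have e₃ : G.Adj a₃ b₃ := hX.1 h₃
  set w : G.Walk a₁ b₃ :=
    Walk.cons e₁ (p.append (Walk.cons e₂ (q.append (Walk.cons e₃ Walk.nil)))) with hw
  have hlen : w.length = G.dist a₁ b₃ := by
    simp only [hw, Walk.length_cons, Walk.length_append, Walk.length_nil]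
    omega
  have hpath : w.IsPath := w.isPath_of_length_eq_dist hlen
  have hnd := hpath.isTrail.edges_nodup
  have hle := hX.2 _ _ w hpath hlen
  have hedges : w.edges = s(a₁, b₁) :: (p.edges ++ s(a₂, b₂) :: (q.edges ++ [s(a₃, b₃)])) := by
    simp [hw, Walk.edges_append]
  rw [hedges] at hnd
  have h12 : s(a₁, b₁) ≠ s(a₂, b₂) := by
    intro h
    rw [h] at hnd
    simp at hnd
  have h13 : s(a₁, b₁) ≠ s(a₃, b₃) := by
    intro h
    rw [h] at hnd
    simp at hnd
  have h23 : s(a₂, b₂) ≠ s(a₃, b₃) := by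
    intro h
    rw [h] at hnd
    simp [List.nodup_append] at hnd
  have hsub : {s(a₁, b₁), s(a₂, b₂), s(a₃, b₃)} ⊆ X ∩ {e | e ∈ w.edges} := by
    rintro e (rfl | rfl | rfl)
    · exact ⟨h₁, by simp [hedges]⟩
    · exact ⟨h₂, by simp [hedges]⟩
    · exact ⟨h₃, by simp [hedges]⟩
  have hfin : (X ∩ {e | e ∈ w.edges}).Finite :=
    (List.finite_toSet w.edges).subset Set.inter_subset_right
  have h3 := Set.ncard_le_ncard hsub hfin
  rw [Set.ncard_eq_three.2 ⟨_, _, _, h12, h13, h23, rfl⟩] at h3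
  omega

/-- No geodesic starting in `r` contains two edges of `X`. -/
def Good (G : SimpleGraph V) (X : Set (Sym2 V)) (r : V) : Prop :=
  ∀ a₁ b₁ a₂ b₂, s(a₁, b₁) ∈ X → s(a₂, b₂) ∈ X →
    G.dist r b₂ ≠ G.dist r a₁ + 1 + G.dist b₁ a₂ + 1

/-- A geodesic from `x` with two edges of `X` must start with the edge `xy`, if this edge is a
bridge in `X`; its last edge then also ends a geodesic from `y`. -/
lemma last_edge_of_not_good (hG : G.Connected) {X : Set (Sym2 V)} (hX : G.IsEdgeGPSet X) {x y : V}
    (hxy : s(x, y) ∈ X) (hb : DistBridge G x y) (hx : ¬ Good G X x) :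
    ∃ a b, s(a, b) ∈ X ∧ G.dist b x = G.dist b y + 1 ∧ G.dist y b = G.dist y a + 1 := by
  simp only [Good, not_forall, not_not] at hx
  obtain ⟨a₁, b₁, a₂, b₂, h₁, h₂, hd⟩ := hx
  have hab : G.Adj a₂ b₂ := hX.1 h₂
  have hab₁ : G.Adj a₁ b₁ := hX.1 h₁
  refine ⟨a₂, b₂, h₂, ?_⟩
  have hb₂ : G.dist b₂ x = G.dist b₂ y + 1 := by
    rcases hb.1 b₂ with h | h
    · exfalso
      refine no_three hG hX (a₁ := y) (b₁ := x) (by rwa [Sym2.eq_swap]) h₁ h₂ ?_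
      rw [dist_comm, h, dist_comm, hd]
      omega
    · exact h
  refine ⟨hb₂, ?_⟩
  have t1 := hG.dist_triangle (u := x) (v := a₁) (w := a₂)
  have t2 := hG.dist_triangle (u := a₁) (v := b₁) (w := a₂)
  have t3 := hG.dist_triangle (u := x) (v := a₂) (w := b₂)
  have o1 := dist_eq_one_iff_adj.2 hab
  have o2 := dist_eq_one_iff_adj.2 hab₁
  have c1 := G.dist_comm (u := x) (v := b₂)
  have c2 := G.dist_comm (u := y) (v := b₂)
  have c3 := G.dist_comm (u := x) (v := a₂)
  have c4 := G.dist_comm (u := y) (v := a₂)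
  rcases hb.1 a₂ with h | h
  · exfalso
    obtain ⟨rfl, rfl⟩ := hb.eq_of_adj hG h hb₂ hab
    omega
  · omega

lemma exists_good_root (hG : G.Connected) {X : Set (Sym2 V)} (hX : G.IsEdgeGPSet X) {x y : V}
    (hxy : s(x, y) ∈ X) (hb : DistBridge G x y) : ∃ r, Good G X r := by
  by_contra! hn
  obtain ⟨a, b, hab, h1, h2⟩ := last_edge_of_not_good hG hX hxy hb (hn x)
  obtain ⟨c, d, hcd, h3, h4⟩ :=
    last_edge_of_not_good hG hX (by rwa [Sym2.eq_swap]) hb.symm (hn y)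
  -- The geodesic `d c … x y … a b` contains three edges of `X`.
  refine no_three hG hX (a₁ := d) (b₁ := c) (by rwa [Sym2.eq_swap]) hxy hab ?_
  rw [hb.2 d b h3 h1, G.dist_comm (u := d), h4, h2, G.dist_comm (u := c)]
  omega

/-- A geodesic from `r` through a bridge `xy` without simplicial endpoints extends to one whose last
edge `wz` ends in a simplicial vertex `z`. The bridge `xy` separates `r` from `w` and `z`. -/
lemma exists_far_edge [Fintype V] (hQ : BridgeOrSimplicial G) {r x y : V} (hxy : G.Adj x y)
    (hx : ¬ G.IsSimplicialVertex x) (hy : ¬ G.IsSimplicialVertex y)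
    (hr : G.dist r y = G.dist r x + 1) :
    ∃ w z, G.Adj w z ∧ G.IsSimplicialVertex z ∧ G.dist r z = G.dist r w + 1 ∧
      G.dist w x = G.dist w y + 1 ∧ G.dist z x = G.dist z y + 1 := by
  have hb := hQ.distBridge hxy hx hy
  have hyx : G.dist y x = G.dist y y + 1 := by
    rw [dist_self, dist_eq_one_iff_adj.2 hxy.symm]
  let P : Set (V × V) := {d | G.Adj d.1 d.2 ∧ ¬ G.IsSimplicialVertex d.1 ∧
    G.dist r d.2 = G.dist r d.1 + 1 ∧ G.dist d.2 x = G.dist d.2 y + 1}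
  obtain ⟨⟨w, z⟩, ⟨hwz, hw, hrz, hz⟩, hmax⟩ := Set.exists_max_image P (fun d => G.dist r d.2)
    (Set.toFinite _) ⟨(x, y), hxy, hx, hr, hyx⟩
  dsimp only at hwz hw hrz hz hmax
  have hzs : G.IsSimplicialVertex z := by
    by_contra hzn
    have hb' := hQ.distBridge hwz hw hzn
    obtain ⟨u, hzu, huw⟩ : ∃ u, G.Adj z u ∧ u ≠ w := by
      by_contra! hall
      exact hzn fun a ha b hb hab => absurd ((hall a ha).trans (hall b hb).symm) hab
    have hu : G.dist u w = G.dist u z + 1 := by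
      rcases hb'.1 u with h | h
      · exact absurd (hb'.eq_of_adj hQ.1 h
          (by rw [dist_self, dist_eq_one_iff_adj.2 hwz.symm]) hzu.symm).1 huw
      · exact h
    have hru := hb'.2 r u hrz hu
    rw [dist_eq_one_iff_adj.2 hzu] at hru
    have hux : G.dist u x = G.dist u y + 1 := by
      rcases hb.1 u with h | h
      · obtain ⟨rfl, rfl⟩ := hb.eq_of_adj hQ.1 h hz hzu.symm
        omega
      · exact h
    have := hmax (z, u) ⟨hzu, hzn, by dsimp only; omega, hux⟩
    dsimp only at this
    omega
  refine ⟨w, z, hwz, hzs, hrz, ?_, hz⟩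
  rcases hb.1 w with h | h
  · obtain ⟨rfl, rfl⟩ := hb.eq_of_adj hQ.1 h hz hwz
    exact absurd hzs hy
  · exact h

/-- For a good root `r`, at most one bridge in `X` separates `r` from a given vertex `z`. -/
lemma bridge_unique (hG : G.Connected) {X : Set (Sym2 V)} (hX : G.IsEdgeGPSet X) {r z x y x' y' : V}
    (hr : Good G X r) (hxy : s(x, y) ∈ X) (hxy' : s(x', y') ∈ X)
    (hb : DistBridge G x y) (hb' : DistBridge G x' y')
    (h1 : G.dist r y = G.dist r x + 1) (h1' : G.dist r y' = G.dist r x' + 1)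
    (h2 : G.dist z x = G.dist z y + 1) (h2' : G.dist z x' = G.dist z y' + 1) :
    x = x' ∧ y = y' := by
  have hadj : G.Adj x y := hX.1 hxy
  have hadj' : G.Adj x' y' := hX.1 hxy'
  rcases hb.1 x' with h3 | h3
  · rcases hb'.1 x with h4 | h4
    · rcases hb.1 y' with h5 | h5
      · rcases hb'.1 y with h6 | h6
        · have k1 := hb.2 y' z h5 h2
          have k2 := hb'.2 y z h6 h2'
          omega
        · exact hb'.eq_of_adj hG h4 h6 hadj
      · have := hb.eq_of_adj hG h3 h5 hadj'
        exact ⟨this.1.symm, this.2.symm⟩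
    · have := hb'.2 r x h1' h4
      exact absurd (by omega) (hr x' y' x y hxy' hxy)
  · have := hb.2 r x' h1 h3
    exact absurd (by omega) (hr x y x' y' hxy hxy')

lemma ncard_le [Fintype V] (hQ : BridgeOrSimplicial G) {X : Set (Sym2 V)} (hX : G.IsEdgeGPSet X) :
    X.ncard ≤ (simplicialEdges G).ncard := by
  classical
  by_cases hsub : X ⊆ simplicialEdges G
  · exact Set.ncard_le_ncard hsub (Set.toFinite _)
  have hbr : ∀ x y, s(x, y) ∈ X \ simplicialEdges G → G.Adj x y ∧
      ¬ G.IsSimplicialVertex x ∧ ¬ G.IsSimplicialVertex y := by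
    intro x y h
    have hadj : G.Adj x y := hX.1 h.1
    exact ⟨hadj, fun hs => h.2 ⟨hadj, x, Sym2.mem_mk_left _ _, hs⟩,
      fun hs => h.2 ⟨hadj, y, Sym2.mem_mk_right _ _, hs⟩⟩
  obtain ⟨r, hr⟩ : ∃ r, Good G X r := by
    obtain ⟨e, heX, he⟩ := Set.not_subset.1 hsub
    induction e using Sym2.ind with
    | _ x y =>
      obtain ⟨h1, h2, h3⟩ := hbr x y ⟨heX, he⟩
      exact exists_good_root hQ.1 hX heX (hQ.distBridge h1 h2 h3)
  have key : ∀ e ∈ X \ simplicialEdges G, ∃ x y w z, e = s(x, y) ∧ G.Adj w z ∧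
      G.IsSimplicialVertex z ∧ G.dist r y = G.dist r x + 1 ∧ G.dist r z = G.dist r w + 1 ∧
      G.dist w x = G.dist w y + 1 ∧ G.dist z x = G.dist z y + 1 := by
    intro e he
    induction e using Sym2.ind with
    | _ x y =>
      obtain ⟨h1, h2, h3⟩ := hbr x y he
      rcases (hQ.distBridge h1 h2 h3).1 r with h | h
      · obtain ⟨w, z, k1, k2, k3, k4, k5⟩ := exists_far_edge hQ h1 h2 h3 h
        exact ⟨x, y, w, z, rfl, k1, k2, h, k3, k4, k5⟩
      · obtain ⟨w, z, k1, k2, k3, k4, k5⟩ := exists_far_edge hQ h1.symm h3 h2 h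
        exact ⟨y, x, w, z, Sym2.eq_swap, k1, k2, h, k3, k4, k5⟩
  have : Nonempty V := ⟨r⟩
  choose! x y w z hk using key
  have hle : (X \ simplicialEdges G).ncard ≤ (simplicialEdges G \ X).ncard := by
    refine Set.ncard_le_ncard_of_injOn (fun e => s(w e, z e)) ?_ ?_ (Set.toFinite _)
    · intro e he
      obtain ⟨k0, k1, k2, k3, k4, k5, k6⟩ := hk e he
      refine ⟨⟨k1, z e, Sym2.mem_mk_right _ _, k2⟩, fun hin => ?_⟩
      have he' := he
      rw [k0] at he'
      obtain ⟨h1, h2, h3⟩ := hbr _ _ he'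
      have := (hQ.distBridge h1 h2 h3).2 r (w e) k3 k5
      exact hr _ _ _ _ he'.1 hin (by omega)
    · intro e he e' he' heq
      obtain ⟨k0, k1, k2, k3, k4, k5, k6⟩ := hk e he
      obtain ⟨l0, l1, l2, l3, l4, l5, l6⟩ := hk e' he'
      have hz : z e = z e' := by
        rcases Sym2.eq_iff.1 heq with h | ⟨h5, h6⟩
        · exact h.2
        -- The far endpoint is the one at larger distance from `r`.
        · rw [h5, h6] at k4
          omega
      have g := he
      have g' := he'
      rw [k0] at g
      rw [l0] at g'
      obtain ⟨h1, h2, h3⟩ := hbr _ _ g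
      obtain ⟨h1', h2', h3'⟩ := hbr _ _ g'
      rw [← hz] at l6
      have := bridge_unique hQ.1 hX hr g.1 g'.1 (hQ.distBridge h1 h2 h3)
        (hQ.distBridge h1' h2' h3') k3 l3 k6 l6
      rw [k0, l0, this.1, this.2]
  have s1 := Set.ncard_inter_add_ncard_sdiff_eq_ncard X (simplicialEdges G) (Set.toFinite _)
  have s2 := Set.ncard_inter_add_ncard_sdiff_eq_ncard (simplicialEdges G) X (Set.toFinite _)
  rw [Set.inter_comm] at s2
  omega

lemma egp_eq [Fintype V] (hQ : BridgeOrSimplicial G) : G.egp = (simplicialEdges G).ncard := by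
  apply IsGreatest.csSup_eq
  refine ⟨⟨_, isEdgeGPSet_simplicialEdges hQ.1, rfl⟩, ?_⟩
  rintro n ⟨X, hX, rfl⟩
  exact ncard_le hQ hX

end ThickLeaved

/-- If `G` is a thick-leaved tree with simplicial blocks `B₁, …, B_k`, then
`gp_e(G) = Σᵢ C(n(Bᵢ), 2)`. -/
theorem egp_thickLeavedTree {V : Type} [Fintype V] (G : SimpleGraph V)
    (h : IsThickLeavedTree G) :
    G.egp = ∑ᶠ B ∈ simplicialBlocks G, (Set.ncard B).choose 2 := by
  have hQ := ThickLeaved.bridgeOrSimplicial_of_isThickLeavedTree h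
  rw [ThickLeaved.egp_eq hQ, ThickLeaved.sum_blocks_eq hQ]
end

section
/- Let n ≥ 2 and 1 ≤ k ≤ n, and let G be the graph obtained from the complete graph K_n by selecting k vertices of K_n and attaching to each selected vertex a separate pendant path (of arbitrary positive length). Then gp_e(G) = C(n, 2) + 1, where C(n,2) = n(n−1)/2; moreover, the edges of K_n together with any one additional edge of G form a largest edge general position set of G. -/
/-- The graph obtained from the complete graph `K_n` (on `Fin n`) by selecting the `k`
vertices `σ 0, …, σ (k-1)` (`σ` injective) and attaching to the vertex `σ i` a separate
pendant path with `ℓ i` new vertices `(i, 0), …, (i, ℓ i - 1)`, the vertex `(i, 0)`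
being joined to `σ i`. -/
def cliqueWithPendantPaths (n k : ℕ) (σ : Fin k ↪ Fin n) (ℓ : Fin k → ℕ) :
    SimpleGraph (Fin n ⊕ (Σ i : Fin k, Fin (ℓ i))) :=
  SimpleGraph.fromRel (fun a b =>
    match a, b with
    | Sum.inl _, Sum.inl _ => True
    | Sum.inl x, Sum.inr ⟨i, j⟩ => x = σ i ∧ j.1 = 0
    | Sum.inr ⟨i, j⟩, Sum.inr ⟨i', j'⟩ => i.1 = i'.1 ∧ j.1 + 1 = j'.1
    | _, _ => False)

/-- The set of edges of the underlying complete graph `K_n`. -/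
def cliqueEdges (n k : ℕ) (ℓ : Fin k → ℕ) : Set (Sym2 (Fin n ⊕ (Σ i : Fin k, Fin (ℓ i)))) :=
  {e | ∃ x y : Fin n, x ≠ y ∧ e = s(Sum.inl x, Sum.inl y)}

namespace CliquePendant

open SimpleGraph

variable {n k : ℕ} {σ : Fin k ↪ Fin n} {ℓ : Fin k → ℕ}

/-! ### Structure of the graph -/

/-- The neighbour of the pendant vertex `a` in the direction of the clique. -/
def parent (σ : Fin k ↪ Fin n) (a : Σ i : Fin k, Fin (ℓ i)) : Fin n ⊕ (Σ i : Fin k, Fin (ℓ i)) :=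
  if a.2.1 = 0 then Sum.inl (σ a.1) else Sum.inr ⟨a.1, ⟨a.2.1 - 1, by omega⟩⟩

/-- The edge joining the pendant vertex `a` to its parent. -/
def parentEdge (σ : Fin k ↪ Fin n) (a : Σ i : Fin k, Fin (ℓ i)) :
    Sym2 (Fin n ⊕ (Σ i : Fin k, Fin (ℓ i))) :=
  s(Sum.inr a, parent σ a)

lemma adj_inl {x y : Fin n} (h : x ≠ y) :
    (cliqueWithPendantPaths n k σ ℓ).Adj (Sum.inl x) (Sum.inl y) := by
  simp [cliqueWithPendantPaths, h]

lemma adj_parent (a : Σ i : Fin k, Fin (ℓ i)) :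
    (cliqueWithPendantPaths n k σ ℓ).Adj (Sum.inr a) (parent σ a) := by
  obtain ⟨i, j, hj⟩ := a
  by_cases h : j = 0
  · simp [parent, cliqueWithPendantPaths, h]
  · have : j - 1 + 1 = j := by omega
    simp [parent, cliqueWithPendantPaths, h, this]
    omega

/-- Every edge is a clique edge or the parent edge of a pendant vertex. -/
lemma mem_edgeSet_cases {e : Sym2 (Fin n ⊕ (Σ i : Fin k, Fin (ℓ i)))}
    (he : e ∈ (cliqueWithPendantPaths n k σ ℓ).edgeSet) :
    e ∈ cliqueEdges n k ℓ ∨ ∃ a, e = parentEdge σ a := by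
  induction e using Sym2.ind with
  | _ u v =>
    rw [mem_edgeSet] at he
    rcases u with x | ⟨i, j, hj⟩ <;> rcases v with y | ⟨i', j', hj'⟩
    · left
      exact ⟨x, y, fun h => he.ne (by rw [h]), rfl⟩
    · right
      simp [cliqueWithPendantPaths] at he
      refine ⟨⟨i', j', hj'⟩, ?_⟩
      simp [parentEdge, parent, he]
    · right
      simp [cliqueWithPendantPaths] at he
      refine ⟨⟨i, j, hj⟩, ?_⟩
      simp [parentEdge, parent, he]
    · right
      simp only [cliqueWithPendantPaths, fromRel_adj] at he
      rcases he.2 with ⟨h, h'⟩ | ⟨h, h'⟩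
      · obtain rfl := Fin.ext h
        subst h'
        refine ⟨⟨i, j + 1, hj'⟩, ?_⟩
        simp [parentEdge, parent]
      · obtain rfl := Fin.ext h
        subst h'
        refine ⟨⟨i', j' + 1, hj⟩, ?_⟩
        simp [parentEdge, parent]

lemma parentEdge_injective : Function.Injective (parentEdge (ℓ := ℓ) σ) := by
  rintro ⟨i, j, hj⟩ ⟨i', j', hj'⟩ h
  simp only [parentEdge, Sym2.eq_iff] at h
  rcases h with ⟨h, -⟩ | ⟨h, h'⟩
  · exact Sum.inr_injective h
  · -- Each vertex would be the parent of the other, so each index would exceed the other.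
    exfalso
    simp only [parent] at h h'
    split_ifs at h h' with h1 h2
    simp only [Sum.inr.injEq, Sigma.mk.injEq] at h h'
    obtain ⟨rfl, h⟩ := h
    have := h'.2
    simp only [heq_eq_eq, Fin.mk.injEq] at h this
    omega

lemma parentEdge_notMem_cliqueEdges (a : Σ i : Fin k, Fin (ℓ i)) :
    parentEdge σ a ∉ cliqueEdges n k ℓ := by
  rintro ⟨x, y, -, h⟩
  simp [parentEdge] at h

lemma mk_mem_cliqueEdges {x y : Fin n} (h : x ≠ y) :
    s(Sum.inl x, Sum.inl y) ∈ cliqueEdges n k ℓ := ⟨x, y, h, rfl⟩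

lemma cliqueEdges_subset : cliqueEdges n k ℓ ⊆ (cliqueWithPendantPaths n k σ ℓ).edgeSet := by
  rintro _ ⟨x, y, h, rfl⟩
  exact (mem_edgeSet _).2 (adj_inl h)

lemma ncard_cliqueEdges : (cliqueEdges n k ℓ).ncard = n.choose 2 := by
  have h : cliqueEdges n k ℓ = Sym2.map Sum.inl '' (⊤ : SimpleGraph (Fin n)).edgeSet := by
    ext e
    constructor
    · rintro ⟨x, y, h, rfl⟩
      exact ⟨s(x, y), by simpa using h, rfl⟩
    · rintro ⟨e, he, rfl⟩
      induction e using Sym2.ind with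
      | _ x y => exact ⟨x, y, by simpa using he, rfl⟩
  rw [h, Set.ncard_image_of_injective _ (Sym2.map.injective Sum.inl_injective),
    Set.ncard_eq_toFinset_card']
  have := card_edgeFinset_top_eq_card_choose_two (V := Fin n)
  rw [Fintype.card_fin] at this
  exact this

/-! ### Shortest paths through pendant paths -/

/-- A walk along which a potential that changes by at most one on every edge grows by the length
of the walk is a shortest walk. -/
lemma length_eq_dist_of_potential {V : Type*} {G : SimpleGraph V} (f : V → ℤ)
    (hf : ∀ u v, G.Adj u v → f v ≤ f u + 1) {u v : V} (p : G.Walk u v)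
    (hp : f v = f u + p.length) : p.length = G.dist u v := by
  have key : ∀ {u v : V} (q : G.Walk u v), f v ≤ f u + q.length := by
    intro u v q
    induction q with
    | nil => simp
    | cons h q ih =>
      have := hf _ _ h
      rw [Walk.length_cons]
      push_cast
      omega
  refine le_antisymm ?_ (dist_le p)
  obtain ⟨q, hq⟩ := p.reachable.exists_walk_length_eq_dist
  have := key q
  omega

/-- The distance from the attachment vertex `σ i`, taken negative on the pendant path of `i`. -/
def potential (σ : Fin k ↪ Fin n) (ℓ : Fin k → ℕ) (i : Fin k) :
    Fin n ⊕ (Σ i : Fin k, Fin (ℓ i)) → ℤ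
  | Sum.inl x => if x = σ i then 0 else 1
  | Sum.inr a => if a.1 = i then -(a.2.1 + 1 : ℤ) else a.2.1 + 2

lemma potential_parent (i : Fin k) (a : Σ i : Fin k, Fin (ℓ i)) :
    potential σ ℓ i (parent σ a) =
      potential σ ℓ i (Sum.inr a) + if a.1 = i then 1 else -1 := by
  obtain ⟨i', j, hj⟩ := a
  by_cases h0 : j = 0 <;> by_cases hi : i' = i <;> simp [parent, potential, h0, hi] <;> omega

lemma potential_lipschitz (i : Fin k) (u v : Fin n ⊕ (Σ i : Fin k, Fin (ℓ i)))
    (h : (cliqueWithPendantPaths n k σ ℓ).Adj u v) :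
    potential σ ℓ i v ≤ potential σ ℓ i u + 1 := by
  rcases mem_edgeSet_cases ((mem_edgeSet _).2 h) with ⟨x, y, -, h⟩ | ⟨a, h⟩
  · rcases Sym2.eq_iff.1 h with ⟨rfl, rfl⟩ | ⟨rfl, rfl⟩ <;> simp only [potential] <;>
      split_ifs <;> omega
  · have := potential_parent (σ := σ) i a
    rcases Sym2.eq_iff.1 h with ⟨rfl, rfl⟩ | ⟨rfl, rfl⟩ <;> split_ifs at this <;> omega

/-- The walk from a pendant vertex down to the clique. -/
lemma exists_walk_down (i : Fin k) (j : ℕ) (hj : j < ℓ i) :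
    ∃ w : (cliqueWithPendantPaths n k σ ℓ).Walk (Sum.inr ⟨i, j, hj⟩) (Sum.inl (σ i)),
      w.length = j + 1 ∧
        ∀ j' (h : j' ≤ j), parentEdge σ ⟨i, j', by omega⟩ ∈ w.edges := by
  induction j with
  | zero =>
    have h : (cliqueWithPendantPaths n k σ ℓ).Adj (Sum.inr ⟨i, 0, hj⟩) (Sum.inl (σ i)) :=
      adj_parent ⟨i, 0, hj⟩
    refine ⟨Walk.cons h Walk.nil, rfl, fun j' h' => ?_⟩
    obtain rfl : j' = 0 := by omega
    simp [parentEdge, parent]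
  | succ j ih =>
    obtain ⟨w, hw, he⟩ := ih (by omega)
    have h : (cliqueWithPendantPaths n k σ ℓ).Adj (Sum.inr ⟨i, j + 1, hj⟩)
        (Sum.inr ⟨i, j, by omega⟩) := adj_parent ⟨i, j + 1, hj⟩
    refine ⟨Walk.cons h w, by simp [hw], fun j' h' => ?_⟩
    rw [Walk.edges_cons, List.mem_cons]
    rcases Nat.lt_or_ge j j' with hlt | hle
    · left
      obtain rfl : j' = j + 1 := by omega
      simp [parentEdge, parent]
    · exact Or.inr (he j' hle)

/-- A whole pendant path followed by a clique edge is a shortest path. -/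
lemma exists_geodesic_pendant_clique (hℓ : ∀ i, 1 ≤ ℓ i) (i : Fin k) {y : Fin n}
    (hy : σ i ≠ y) :
    ∃ (u v : _) (p : (cliqueWithPendantPaths n k σ ℓ).Walk u v),
      p.length = (cliqueWithPendantPaths n k σ ℓ).dist u v ∧
      (∀ j, parentEdge σ ⟨i, j⟩ ∈ p.edges) ∧ s(Sum.inl (σ i), Sum.inl y) ∈ p.edges := by
  have hi := hℓ i
  obtain ⟨w, hw, he⟩ := exists_walk_down (σ := σ) (ℓ := ℓ) i (ℓ i - 1) (by omega)
  refine ⟨_, _, w.append (Walk.cons (adj_inl hy) Walk.nil),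
    length_eq_dist_of_potential (potential σ ℓ i) (potential_lipschitz i) _ ?_, ?_, ?_⟩
  · simp [potential, hw, hy.symm]
    ring
  · intro j
    rw [Walk.edges_append, List.mem_append]
    exact Or.inl (he j.1 (by omega))
  · simp [Walk.edges_append]

/-- Two whole pendant paths joined by a clique edge form a shortest path. -/
lemma exists_geodesic_two_pendants (hℓ : ∀ i, 1 ≤ ℓ i) {i i' : Fin k} (hii : i ≠ i') :
    ∃ (u v : _) (p : (cliqueWithPendantPaths n k σ ℓ).Walk u v),
      p.length = (cliqueWithPendantPaths n k σ ℓ).dist u v ∧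
      (∀ j, parentEdge σ ⟨i, j⟩ ∈ p.edges) ∧ (∀ j, parentEdge σ ⟨i', j⟩ ∈ p.edges) ∧
      s(Sum.inl (σ i), Sum.inl (σ i')) ∈ p.edges := by
  have hi := hℓ i
  have hi' := hℓ i'
  have hσ : σ i ≠ σ i' := σ.injective.ne hii
  obtain ⟨w, hw, he⟩ := exists_walk_down (σ := σ) (ℓ := ℓ) i (ℓ i - 1) (by omega)
  obtain ⟨w', hw', he'⟩ := exists_walk_down (σ := σ) (ℓ := ℓ) i' (ℓ i' - 1) (by omega)
  refine ⟨_, _, w.append (Walk.cons (adj_inl hσ) w'.reverse),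
    length_eq_dist_of_potential (potential σ ℓ i) (potential_lipschitz i) _ ?_, ?_, ?_, ?_⟩
  · simp [potential, hw, hw', hii.symm]
    omega
  · intro j
    rw [Walk.edges_append, List.mem_append]
    exact Or.inl (he j.1 (by omega))
  · intro j
    simp only [Walk.edges_append, Walk.edges_cons, Walk.edges_reverse, List.mem_append,
      List.mem_cons, List.mem_reverse]
    exact Or.inr (Or.inr (he' j.1 (by omega)))
  · simp [Walk.edges_append]

/-! ### Clique edges and one more edge -/

/-- If two vertices of a shortest walk are adjacent, their positions differ by at most one. -/
lemma getVert_adj_le {V : Type*} {G : SimpleGraph V} {u v : V} (p : G.Walk u v)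
    (hp : p.length = G.dist u v) {i j : ℕ} (hj : j ≤ p.length)
    (h : G.Adj (p.getVert i) (p.getVert j)) : j ≤ i + 1 := by
  have := dist_le ((p.take i).append (Walk.cons h (p.drop j)))
  rw [Walk.length_append, Walk.length_cons, Walk.take_length, Walk.drop_length] at this
  omega

/-- A shortest walk contains at most two vertices of the clique. -/
lemma not_three_inl {u v : Fin n ⊕ (Σ i : Fin k, Fin (ℓ i))}
    (p : (cliqueWithPendantPaths n k σ ℓ).Walk u v)
    (hp : p.length = (cliqueWithPendantPaths n k σ ℓ).dist u v) {x y z : Fin n}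
    (hx : Sum.inl x ∈ p.support) (hy : Sum.inl y ∈ p.support) (hz : Sum.inl z ∈ p.support)
    (hxy : x ≠ y) (hxz : x ≠ z) (hyz : y ≠ z) : False := by
  obtain ⟨a, ha, hal⟩ := Walk.mem_support_iff_exists_getVert.1 hx
  obtain ⟨b, hb, hbl⟩ := Walk.mem_support_iff_exists_getVert.1 hy
  obtain ⟨c, hc, hcl⟩ := Walk.mem_support_iff_exists_getVert.1 hz
  have key : ∀ {x y : Fin n} {a b : ℕ}, p.getVert a = Sum.inl x → p.getVert b = Sum.inl y →
      x ≠ y → b ≤ p.length → b ≤ a + 1 ∧ a ≠ b := by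
    intro x y a b ha hb hxy hbl
    refine ⟨getVert_adj_le p hp hbl (by rw [ha, hb]; exact adj_inl hxy), ?_⟩
    rintro rfl
    exact hxy (Sum.inl_injective (ha.symm.trans hb))
  have h1 := key ha hb hxy hbl
  have h2 := key hb ha hxy.symm hal
  have h3 := key ha hc hxz hcl
  have h4 := key hc ha hxz.symm hal
  have h5 := key hb hc hyz hcl
  have h6 := key hc hb hyz.symm hbl
  omega

lemma cliqueEdges_inter_subsingleton {u v : Fin n ⊕ (Σ i : Fin k, Fin (ℓ i))}
    (p : (cliqueWithPendantPaths n k σ ℓ).Walk u v)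
    (hp : p.length = (cliqueWithPendantPaths n k σ ℓ).dist u v) :
    (cliqueEdges n k ℓ ∩ {e | e ∈ p.edges}).Subsingleton := by
  rintro _ ⟨⟨x, y, hxy, rfl⟩, he⟩ _ ⟨⟨z, w, hzw, rfl⟩, he'⟩
  have hx := Walk.fst_mem_support_of_mem_edges p he
  have hy := Walk.snd_mem_support_of_mem_edges p he
  have hz := Walk.fst_mem_support_of_mem_edges p he'
  have hw := Walk.snd_mem_support_of_mem_edges p he'
  have h1 : z = x ∨ z = y := by
    by_contra! h
    exact not_three_inl p hp hx hy hz hxy h.1.symm h.2.symm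
  have h2 : w = x ∨ w = y := by
    by_contra! h
    exact not_three_inl p hp hx hy hw hxy h.1.symm h.2.symm
  rcases h1 with rfl | rfl <;> rcases h2 with rfl | rfl
  · exact absurd rfl hzw
  · rfl
  · exact Sym2.eq_swap
  · exact absurd rfl hzw

lemma isEdgeGPSet_insert {e : Sym2 (Fin n ⊕ (Σ i : Fin k, Fin (ℓ i)))}
    (he : e ∈ (cliqueWithPendantPaths n k σ ℓ).edgeSet) :
    (cliqueWithPendantPaths n k σ ℓ).IsEdgeGPSet (insert e (cliqueEdges n k ℓ)) := by
  refine ⟨Set.insert_subset he cliqueEdges_subset, fun u v p _ hp => ?_⟩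
  have h1 : (cliqueEdges n k ℓ ∩ {e | e ∈ p.edges}).ncard ≤ 1 :=
    Set.ncard_le_one_iff_subsingleton.2 (cliqueEdges_inter_subsingleton p hp)
  have h2 : insert e (cliqueEdges n k ℓ) ∩ {e | e ∈ p.edges} ⊆
      insert e (cliqueEdges n k ℓ ∩ {e | e ∈ p.edges}) := by
    rintro x ⟨rfl | hx, hx'⟩
    · exact Or.inl rfl
    · exact Or.inr ⟨hx, hx'⟩
  have h3 := Set.ncard_le_ncard h2 (Set.toFinite _)
  have h4 := Set.ncard_insert_le e (cliqueEdges n k ℓ ∩ {e | e ∈ p.edges})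
  omega

/-! ### The upper bound -/

lemma not_three_mem {V : Type*} {G : SimpleGraph V} {X : Set (Sym2 V)} (hX : G.IsEdgeGPSet X)
    {u v : V} (p : G.Walk u v) (hp : p.length = G.dist u v) {a b c : Sym2 V}
    (ha : a ∈ X) (hb : b ∈ X) (hc : c ∈ X) (ha' : a ∈ p.edges) (hb' : b ∈ p.edges)
    (hc' : c ∈ p.edges) (hab : a ≠ b) (hac : a ≠ c) (hbc : b ≠ c) : False := by
  have h := hX.2 u v p (p.isPath_of_length_eq_dist hp) hp
  have hfin : (X ∩ {e | e ∈ p.edges}).Finite := (List.finite_toSet p.edges).inter_of_right X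
  have := (Set.two_lt_ncard hfin).2
    ⟨a, ⟨ha, ha'⟩, b, ⟨hb, hb'⟩, c, ⟨hc, hc'⟩, hab, hac, hbc⟩
  omega

lemma ncard_le_of_isEdgeGPSet (hn : 2 ≤ n) (hℓ : ∀ i, 1 ≤ ℓ i)
    {X : Set (Sym2 (Fin n ⊕ (Σ i : Fin k, Fin (ℓ i))))}
    (hX : (cliqueWithPendantPaths n k σ ℓ).IsEdgeGPSet X) :
    X.ncard ≤ n.choose 2 + 1 := by
  set A : Set (Σ i : Fin k, Fin (ℓ i)) := {a | parentEdge σ a ∈ X} with hA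
  have hcover : X ⊆ (cliqueEdges n k ℓ ∩ X) ∪ parentEdge σ '' A := by
    intro e he
    rcases mem_edgeSet_cases (hX.1 he) with h | ⟨a, rfl⟩
    · exact Or.inl ⟨h, he⟩
    · exact Or.inr ⟨a, he, rfl⟩
  have h1 : X.ncard ≤ (cliqueEdges n k ℓ ∩ X).ncard + A.ncard := by
    refine (Set.ncard_le_ncard hcover (Set.toFinite _)).trans ((Set.ncard_union_le _ _).trans ?_)
    have := Set.ncard_image_le (f := parentEdge σ) (Set.toFinite A)
    omega
  have h2 : (cliqueEdges n k ℓ ∩ X).ncard + (cliqueEdges n k ℓ \ X).ncard = n.choose 2 := by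
    rw [Set.ncard_inter_add_ncard_sdiff_eq_ncard _ _ (Set.toFinite _), ncard_cliqueEdges]
  suffices h3 : A.ncard ≤ (cliqueEdges n k ℓ \ X).ncard + 1 by omega
  have hne : ∀ {a : Σ i : Fin k, Fin (ℓ i)} {x y : Fin n}, x ≠ y →
      parentEdge σ a ≠ s(Sum.inl x, Sum.inl y) := by
    rintro a x y hxy h
    exact parentEdge_notMem_cliqueEdges a (h ▸ mk_mem_cliqueEdges hxy)
  by_cases hinj : Set.InjOn Sigma.fst A
  · rcases A.eq_empty_or_nonempty with h0 | ⟨a₀, ha₀⟩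
    · simp [h0]
    have h4 : (A \ {a₀}).ncard ≤ (cliqueEdges n k ℓ \ X).ncard := by
      refine Set.ncard_le_ncard_of_injOn
        (fun a => s(Sum.inl (σ a₀.1), Sum.inl (σ a.1))) ?_ ?_ (Set.toFinite _)
      · rintro a ⟨ha, haa⟩
        have hfst : a₀.1 ≠ a.1 := fun h => haa (hinj ha ha₀ h.symm)
        have hσ : σ a₀.1 ≠ σ a.1 := σ.injective.ne hfst
        refine ⟨mk_mem_cliqueEdges hσ, fun hmem => ?_⟩
        obtain ⟨u, v, p, hp, e1, e2, e3⟩ := exists_geodesic_two_pendants (σ := σ) hℓ hfst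
        exact not_three_mem hX p hp ha₀ ha hmem (e1 a₀.2) (e2 a.2) e3
          (parentEdge_injective.ne fun h => haa h.symm) (hne hσ) (hne hσ)
      · rintro a ⟨ha, -⟩ b ⟨hb, -⟩ hab
        exact hinj ha hb (σ.injective (Sum.inl_injective (Sym2.congr_right.1 hab)))
    have := Set.ncard_sdiff_singleton_add_one ha₀ (Set.toFinite _)
    omega
  · simp only [Set.InjOn, not_forall] at hinj
    obtain ⟨⟨i, j⟩, ha, ⟨i', j'⟩, hb, hfst, hab⟩ := hinj
    obtain rfl : i = i' := hfst
    have : Nontrivial (Fin n) := Fin.nontrivial_iff_two_le.2 hn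
    obtain ⟨y, hy⟩ := exists_ne (σ i)
    obtain ⟨u, v, p, hp, e1, e2⟩ := exists_geodesic_pendant_clique (ℓ := ℓ) hℓ i hy.symm
    have hmiss : s(Sum.inl (σ i), Sum.inl y) ∈ cliqueEdges n k ℓ \ X :=
      ⟨mk_mem_cliqueEdges hy.symm, fun hmem =>
        not_three_mem hX p hp ha hb hmem (e1 j) (e1 j') e2
          (parentEdge_injective.ne hab) (hne hy.symm) (hne hy.symm)⟩
    have h5 : 0 < (cliqueEdges n k ℓ \ X).ncard := (Set.ncard_pos (Set.toFinite _)).2 ⟨_, hmiss⟩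
    have h6 : ¬ 2 < A.ncard := by
      intro h
      -- A third element of `A`, different from the two on the pendant path of `i`.
      obtain ⟨⟨i', m⟩, hc, hcn⟩ : ∃ c ∈ A, c ∉ ({⟨i, j⟩, ⟨i, j'⟩} : Set (Σ i, Fin (ℓ i))) := by
        refine Set.exists_mem_notMem_of_ncard_lt_ncard ?_ (Set.toFinite _)
        rwa [Set.ncard_pair hab]
      simp only [Set.mem_insert_iff, Set.mem_singleton_iff, not_or] at hcn
      have n1 := parentEdge_injective (σ := σ) |>.ne (a₁ := (⟨i, j⟩ : Σ i, Fin (ℓ i))) (Ne.symm hcn.1)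
      have n2 := parentEdge_injective (σ := σ) |>.ne (a₁ := (⟨i, j'⟩ : Σ i, Fin (ℓ i))) (Ne.symm hcn.2)
      by_cases hi : i = i'
      · subst hi
        exact not_three_mem hX p hp ha hb hc (e1 j) (e1 j') (e1 m)
          (parentEdge_injective.ne hab) n1 n2
      · obtain ⟨u, v, q, hq, f1, f2, -⟩ := exists_geodesic_two_pendants (σ := σ) hℓ hi
        exact not_three_mem hX q hq ha hb hc (f1 j) (f1 j') (f2 m)
          (parentEdge_injective.ne hab) n1 n2
    omega

end CliquePendant

/-- Let `n ≥ 2`, `1 ≤ k ≤ n`, and let `G` be obtained from `K_n` by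
attaching a separate pendant path of positive length to each of `k` selected vertices.
Then `gp_e(G) = C(n,2) + 1`; moreover, the edges of `K_n` together with any one
additional edge of `G` form a largest edge general position set of `G`. -/
theorem egp_cliqueWithPendantPaths (n k : ℕ) (hn : 2 ≤ n) (hk1 : 1 ≤ k) (hkn : k ≤ n)
    (σ : Fin k ↪ Fin n) (ℓ : Fin k → ℕ) (hℓ : ∀ i, 1 ≤ ℓ i) :
    (cliqueWithPendantPaths n k σ ℓ).egp = n.choose 2 + 1 ∧
      ∀ e ∈ (cliqueWithPendantPaths n k σ ℓ).edgeSet, e ∉ cliqueEdges n k ℓ →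
        (cliqueWithPendantPaths n k σ ℓ).IsEdgeGPSet (insert e (cliqueEdges n k ℓ)) ∧
          (insert e (cliqueEdges n k ℓ)).ncard = (cliqueWithPendantPaths n k σ ℓ).egp := by
  have hcard : ∀ e, e ∉ cliqueEdges n k ℓ →
      (insert e (cliqueEdges n k ℓ)).ncard = n.choose 2 + 1 := fun e he => by
    rw [Set.ncard_insert_of_notMem he (Set.toFinite _), CliquePendant.ncard_cliqueEdges]
  -- The first pendant vertex exists since `k` and the lengths are positive.
  let a : Σ i : Fin k, Fin (ℓ i) := ⟨⟨0, hk1⟩, ⟨0, hℓ _⟩⟩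
  have hegp : (cliqueWithPendantPaths n k σ ℓ).egp = n.choose 2 + 1 := by
    refine IsGreatest.csSup_eq ⟨⟨_, CliquePendant.isEdgeGPSet_insert
      (CliquePendant.adj_parent a), hcard _ (CliquePendant.parentEdge_notMem_cliqueEdges a)⟩, ?_⟩
    rintro m ⟨X, hX, rfl⟩
    exact CliquePendant.ncard_le_of_isEdgeGPSet hn hℓ hX
  exact ⟨hegp, fun e he hne =>
    ⟨CliquePendant.isEdgeGPSet_insert he, (hcard e hne).trans hegp.symm⟩⟩
end
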